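/- Let 0 < λ₁ < λ₂ < λ₃, set m = (λ₂² − λ₁²)/(λ₃² − λ₁²), μ(m) = E(m)/K(m), and w² = λ₃² − (λ₃² − λ₁²)·μ(m). Then the mean of the KdV wave field in the genus-1 soliton condensate satisfies (4/π)·∫₀^{λ₁} η²(w² − η²)/√((λ₁² − η²)(λ₂² − η²)(λ₃² − η²)) dη + (4/π)·∫_{λ₂}^{λ₃} η²(η² − w²)/√((η² − λ₁²)(η² − λ₂²)(λ₃² − η²)) dη = λ₁² + λ₂² − λ₃² + 2(λ₃² − λ₁²)·μ(m). -/

import Mathlib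

/-- The complete elliptic integral of the first kind, `K(m) = ∫₀^{π/2} dθ/√(1 - m sin²θ)`. -/
noncomputable def ellipticK (m : ℝ) : ℝ :=
  ∫ θ in (0:ℝ)..(Real.pi / 2), 1 / Real.sqrt (1 - m * Real.sin θ ^ 2)

/-- The complete elliptic integral of the second kind, `E(m) = ∫₀^{π/2} √(1 - m sin²θ) dθ`. -/
noncomputable def ellipticE (m : ℝ) : ℝ :=
  ∫ θ in (0:ℝ)..(Real.pi / 2), Real.sqrt (1 - m * Real.sin θ ^ 2)

/-!
The identity `⟨φ⟩ = λ₁² + λ₂² + λ₃² - 2w²` holds for every number `w²`. In the variable `x = η²`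
the two band integrals form half of `∫ Q/√R` over `[λ₂², λ₃²]` minus the same integral over
`[0, λ₁²]`, with `Q = x² - w²x` and `R = x(x - λ₁²)(x - λ₂²)(λ₃² - x)`, a difference which contour
integration reduces to a residue at infinity.

The residue can be replaced by a real substitution, for any roots `e₁ < e₂ < e₃ < e₄` of `R` and
any monic quadratic `Q`. Put the origin at the point of the gap `(e₂, e₃)` for which
`e₁e₃ = e₂e₄`, and call this common value `-κ`. The map `u = x - κ/x` then sends each band
increasingly onto `[A, B]`, with `A = e₁ + e₃` and `B = e₂ + e₄`, and `R = x²(u - A)(B - u)`. If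
`x₋ < 0 < x₊` are the two preimages of `u`, the difference of the band integrals becomes the
integral of the divided difference `(Q(x₊) - Q(x₋))/(x₊ - x₋)`, which is affine in `u`, against the
arcsine weight `du/√((u - A)(B - u))`.
-/

section BandIntegrals

open Real Set MeasureTheory

theorem integral_div_sqrt_sub_mul_sub {A B : ℝ} (hAB : A < B) (f : ℝ → ℝ) :
    ∫ u in A..B, f u / √((u - A) * (B - u)) =
      ∫ θ in -(π / 2)..π / 2, f ((A + B) / 2 + (B - A) / 2 * sin θ) := by
  have hr : 0 < (B - A) / 2 := by linarith
  have hpi : -(π / 2) ≤ π / 2 := by linarith [pi_pos]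
  have cos_pos : ∀ θ ∈ Ioo (min (-(π / 2)) (π / 2)) (max (-(π / 2)) (π / 2)), 0 < cos θ := by
    rw [min_eq_left hpi, max_eq_right hpi]
    exact fun θ => cos_pos_of_mem_Ioo
  have substitution := intervalIntegral.integral_comp_mul_deriv_of_deriv_nonneg
    (f := fun θ => (A + B) / 2 + (B - A) / 2 * sin θ) (f' := fun θ => (B - A) / 2 * cos θ)
    (g := fun u => f u / √((u - A) * (B - u))) (by fun_prop)
    (fun θ _ => ((hasDerivAt_sin θ).const_mul _).const_add _)
    (fun θ hθ => (mul_pos hr (cos_pos θ hθ)).le)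
  have left_end : (A + B) / 2 + (B - A) / 2 * sin (-(π / 2)) = A := by
    rw [sin_neg, sin_pi_div_two]
    ring
  have right_end : (A + B) / 2 + (B - A) / 2 * sin (π / 2) = B := by
    rw [sin_pi_div_two]
    ring
  rw [left_end, right_end] at substitution
  rw [← substitution]
  refine intervalIntegral.integral_congr_uIoo fun θ hθ => ?_
  have hcos := mul_pos hr (cos_pos θ hθ)
  have radicand : ((A + B) / 2 + (B - A) / 2 * sin θ - A) *
      (B - ((A + B) / 2 + (B - A) / 2 * sin θ)) = ((B - A) / 2 * cos θ) ^ 2 := by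
    rw [mul_pow, cos_sq']
    ring
  simp only [Function.comp_apply]
  rw [radicand, sqrt_sq hcos.le, div_mul_cancel₀ _ hcos.ne']

theorem integral_div_sqrt_self_mul {a b : ℝ} (ha : 0 ≤ a) (hb : 0 ≤ b) (f g : ℝ → ℝ) :
    ∫ x in a ^ 2..b ^ 2, f x / √(x * g x) = 2 * ∫ η in a..b, f (η ^ 2) / √(g (η ^ 2)) := by
  have pos : ∀ η ∈ Ioo (min a b) (max a b), 0 < η := fun η hη => (le_min ha hb).trans_lt hη.1
  have substitution := intervalIntegral.integral_comp_mul_deriv_of_deriv_nonneg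
    (f := fun η => η ^ 2) (f' := fun η => 2 * η) (g := fun x => f x / √(x * g x))
    (a := a) (b := b) (by fun_prop) (fun η _ => by simpa using hasDerivAt_pow 2 η)
    (fun η hη => by linarith [pos η hη])
  rw [← substitution, ← intervalIntegral.integral_const_mul]
  refine intervalIntegral.integral_congr_uIoo fun η hη => ?_
  have hη := pos η hη
  simp only [Function.comp_apply]
  rw [sqrt_mul (sq_nonneg η), sqrt_sq hη.le]
  field_simp

/-- The positive root of `x² - u x - κ` for `0 < κ`, as a function of `u`: the inverse of
`x ↦ x - κ / x` on the positive half-line. -/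
noncomputable def posRoot (κ u : ℝ) : ℝ := (u + √(u ^ 2 + 4 * κ)) / 2

/-- The negative root of `x² - u x - κ` for `0 < κ`, as a function of `u`: the inverse of
`x ↦ x - κ / x` on the negative half-line. -/
noncomputable def negRoot (κ u : ℝ) : ℝ := (u - √(u ^ 2 + 4 * κ)) / 2

theorem posRoot_add_negRoot (κ u : ℝ) : posRoot κ u + negRoot κ u = u := by
  unfold posRoot negRoot
  ring

theorem posRoot_sub_negRoot (κ u : ℝ) : posRoot κ u - negRoot κ u = √(u ^ 2 + 4 * κ) := by
  unfold posRoot negRoot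
  ring

theorem posRoot_neg_mul_add {x y : ℝ} (hyx : y ≤ x) : posRoot (-(x * y)) (x + y) = x := by
  have discriminant : (x + y) ^ 2 + 4 * -(x * y) = (x - y) ^ 2 := by ring
  rw [posRoot, discriminant, sqrt_sq (sub_nonneg.2 hyx)]
  ring

theorem negRoot_neg_mul_add {x y : ℝ} (hyx : y ≤ x) : negRoot (-(x * y)) (x + y) = y := by
  have h := posRoot_add_negRoot (-(x * y)) (x + y)
  rw [posRoot_neg_mul_add hyx] at h
  linarith

variable {κ : ℝ}

theorem posRoot_sq (hκ : 0 ≤ κ) (u : ℝ) : posRoot κ u ^ 2 = u * posRoot κ u + κ := by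
  have h : √(u ^ 2 + 4 * κ) ^ 2 = u ^ 2 + 4 * κ := sq_sqrt (by positivity)
  unfold posRoot
  linear_combination h / 4

theorem negRoot_sq (hκ : 0 ≤ κ) (u : ℝ) : negRoot κ u ^ 2 = u * negRoot κ u + κ := by
  have h : √(u ^ 2 + 4 * κ) ^ 2 = u ^ 2 + 4 * κ := sq_sqrt (by positivity)
  unfold negRoot
  linear_combination h / 4

theorem abs_lt_sqrt_sq_add_four_mul (hκ : 0 < κ) (u : ℝ) : |u| < √(u ^ 2 + 4 * κ) := by
  rw [← sqrt_sq_eq_abs]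
  exact sqrt_lt_sqrt (sq_nonneg u) (by linarith)

theorem sqrt_sq_add_four_mul_pos (hκ : 0 < κ) (u : ℝ) : 0 < √(u ^ 2 + 4 * κ) :=
  sqrt_pos.2 (by positivity)

theorem posRoot_pos (hκ : 0 < κ) (u : ℝ) : 0 < posRoot κ u := by
  unfold posRoot
  linarith [neg_abs_le u, abs_lt_sqrt_sq_add_four_mul hκ u]

theorem negRoot_neg (hκ : 0 < κ) (u : ℝ) : negRoot κ u < 0 := by
  unfold negRoot
  linarith [le_abs_self u, abs_lt_sqrt_sq_add_four_mul hκ u]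

theorem hasDerivAt_sqrt_sq_add_four_mul (hκ : 0 < κ) (u : ℝ) :
    HasDerivAt (fun v => √(v ^ 2 + 4 * κ)) (u / √(u ^ 2 + 4 * κ)) u := by
  refine (((hasDerivAt_pow 2 u).add_const _).sqrt (by positivity)).congr_deriv ?_
  rw [Nat.cast_ofNat, pow_one, mul_div_mul_left _ _ two_ne_zero]

theorem hasDerivAt_posRoot (hκ : 0 < κ) (u : ℝ) :
    HasDerivAt (posRoot κ) (posRoot κ u / √(u ^ 2 + 4 * κ)) u := by
  refine (((hasDerivAt_id u).add (hasDerivAt_sqrt_sq_add_four_mul hκ u)).div_const 2).congr_deriv ?_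
  have := sqrt_sq_add_four_mul_pos hκ u
  unfold posRoot
  field_simp
  ring

theorem hasDerivAt_negRoot (hκ : 0 < κ) (u : ℝ) :
    HasDerivAt (negRoot κ) (-negRoot κ u / √(u ^ 2 + 4 * κ)) u := by
  refine (((hasDerivAt_id u).sub (hasDerivAt_sqrt_sq_add_four_mul hκ u)).div_const 2).congr_deriv ?_
  have := sqrt_sq_add_four_mul_pos hκ u
  unfold negRoot
  field_simp
  ring

@[fun_prop]
theorem continuous_posRoot (κ : ℝ) : Continuous (posRoot κ) := by
  unfold posRoot
  fun_prop

@[fun_prop]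
theorem continuous_negRoot (κ : ℝ) : Continuous (negRoot κ) := by
  unfold negRoot
  fun_prop

theorem sqrt_mul_of_sq_eq {x u : ℝ} (hx : x ^ 2 = u * x + κ) (A B : ℝ) :
    √((x ^ 2 - A * x - κ) * (κ + B * x - x ^ 2)) = |x| * √((u - A) * (B - u)) := by
  have factored : (x ^ 2 - A * x - κ) * (κ + B * x - x ^ 2) = x ^ 2 * ((u - A) * (B - u)) := by
    rw [show x ^ 2 - A * x - κ = x * (u - A) by linear_combination hx,
      show κ + B * x - x ^ 2 = x * (B - u) by linear_combination -hx]
    ring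
  rw [factored, sqrt_mul (sq_nonneg x), sqrt_sq_eq_abs]

theorem integral_posRoot_posRoot (hκ : 0 < κ) (A B : ℝ) (f : ℝ → ℝ) :
    ∫ x in posRoot κ A..posRoot κ B, f x / √((x ^ 2 - A * x - κ) * (κ + B * x - x ^ 2)) =
      ∫ u in A..B, f (posRoot κ u) / √(u ^ 2 + 4 * κ) / √((u - A) * (B - u)) := by
  rw [← intervalIntegral.integral_comp_mul_deriv_of_deriv_nonneg (by fun_prop)
    (fun u _ => hasDerivAt_posRoot hκ u)
    (fun u _ => div_nonneg (posRoot_pos hκ u).le (sqrt_nonneg _))]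
  congr 1 with u
  have := posRoot_pos hκ u
  simp only [Function.comp_apply]
  rw [sqrt_mul_of_sq_eq (posRoot_sq hκ.le u), abs_of_pos this]
  field_simp

theorem integral_negRoot_negRoot (hκ : 0 < κ) (A B : ℝ) (f : ℝ → ℝ) :
    ∫ x in negRoot κ A..negRoot κ B, f x / √((x ^ 2 - A * x - κ) * (κ + B * x - x ^ 2)) =
      ∫ u in A..B, f (negRoot κ u) / √(u ^ 2 + 4 * κ) / √((u - A) * (B - u)) := by
  rw [← intervalIntegral.integral_comp_mul_deriv_of_deriv_nonneg (by fun_prop)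
    (fun u _ => hasDerivAt_negRoot hκ u)
    (fun u _ => div_nonneg (neg_pos.2 (negRoot_neg hκ u)).le (sqrt_nonneg _))]
  congr 1 with u
  have := (negRoot_neg hκ u).ne
  simp only [Function.comp_apply]
  rw [sqrt_mul_of_sq_eq (negRoot_sq hκ.le u), abs_of_neg (negRoot_neg hκ u)]
  field_simp

theorem divided_difference_posRoot_negRoot (hκ : 0 < κ) (s t u : ℝ) :
    (posRoot κ u ^ 2 + s * posRoot κ u + t) / √(u ^ 2 + 4 * κ) -
      (negRoot κ u ^ 2 + s * negRoot κ u + t) / √(u ^ 2 + 4 * κ) = u + s := by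
  rw [← sub_div, div_eq_iff (sqrt_sq_add_four_mul_pos hκ u).ne', ← posRoot_sub_negRoot]
  linear_combination (posRoot κ u - negRoot κ u) * posRoot_add_negRoot κ u

theorem integral_posRoot_sub_integral_negRoot (hκ : 0 < κ) {A B : ℝ} (hAB : A < B) (s t : ℝ) :
    (∫ x in posRoot κ A..posRoot κ B,
        (x ^ 2 + s * x + t) / √((x ^ 2 - A * x - κ) * (κ + B * x - x ^ 2))) -
      (∫ x in negRoot κ A..negRoot κ B,
        (x ^ 2 + s * x + t) / √((x ^ 2 - A * x - κ) * (κ + B * x - x ^ 2))) =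
      π * ((A + B) / 2 + s) := by
  have integrable (f : ℝ → ℝ) (hf : Continuous f) : IntervalIntegrable
      (fun θ => f ((A + B) / 2 + (B - A) / 2 * sin θ) /
        √(((A + B) / 2 + (B - A) / 2 * sin θ) ^ 2 + 4 * κ)) volume (-(π / 2)) (π / 2) :=
    (Continuous.div (by fun_prop) (by fun_prop)
      fun θ => (sqrt_sq_add_four_mul_pos hκ _).ne').intervalIntegrable _ _
  have arcsine_mean : ∫ θ in -(π / 2)..π / 2, ((A + B) / 2 + (B - A) / 2 * sin θ + s) =
      π * ((A + B) / 2 + s) := by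
    rw [intervalIntegral.integral_add (Continuous.intervalIntegrable (by fun_prop) _ _)
        (Continuous.intervalIntegrable (by fun_prop) _ _),
      intervalIntegral.integral_add (Continuous.intervalIntegrable (by fun_prop) _ _)
        (Continuous.intervalIntegrable (by fun_prop) _ _)]
    simp only [intervalIntegral.integral_const_mul, intervalIntegral.integral_const, integral_sin,
      cos_neg, sub_self, smul_eq_mul]
    ring
  rw [integral_posRoot_posRoot hκ A B fun x => x ^ 2 + s * x + t,
    integral_negRoot_negRoot hκ A B fun x => x ^ 2 + s * x + t,
    integral_div_sqrt_sub_mul_sub hAB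
      fun u => (posRoot κ u ^ 2 + s * posRoot κ u + t) / √(u ^ 2 + 4 * κ),
    integral_div_sqrt_sub_mul_sub hAB
      fun u => (negRoot κ u ^ 2 + s * negRoot κ u + t) / √(u ^ 2 + 4 * κ),
    ← intervalIntegral.integral_sub
      (integrable (fun u => posRoot κ u ^ 2 + s * posRoot κ u + t) (by fun_prop))
      (integrable (fun u => negRoot κ u ^ 2 + s * negRoot κ u + t) (by fun_prop))]
  simp only [divided_difference_posRoot_negRoot hκ]
  exact arcsine_mean

theorem exists_sub_mul_sub_eq {e₁ e₂ e₃ e₄ : ℝ} (h₁₂ : e₁ < e₂) (h₂₃ : e₂ < e₃) (h₃₄ : e₃ < e₄) :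
    ∃ q, e₂ < q ∧ q < e₃ ∧ (e₃ - q) * (e₁ - q) = (e₄ - q) * (e₂ - q) := by
  have hd : 0 < e₂ + e₄ - e₁ - e₃ := by linarith
  refine ⟨(e₂ * e₄ - e₁ * e₃) / (e₂ + e₄ - e₁ - e₃), ?_, ?_, ?_⟩
  · rw [lt_div_iff₀ hd]
    nlinarith [mul_pos (sub_pos.2 h₁₂) (sub_pos.2 h₂₃)]
  · rw [div_lt_iff₀ hd]
    nlinarith [mul_pos (sub_pos.2 h₂₃) (sub_pos.2 h₃₄)]
  · field_simp
    ring

theorem integral_upper_band_sub_integral_lower_band_of_mul_eq {e₁ e₂ e₃ e₄ : ℝ} (h₁₂ : e₁ < e₂)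
    (h₂ : e₂ < 0) (h₃ : 0 < e₃) (h₃₄ : e₃ < e₄) (hmul : e₃ * e₁ = e₄ * e₂) (s t : ℝ) :
    (∫ x in e₃..e₄, (x ^ 2 + s * x + t) / √((x - e₁) * (x - e₂) * (x - e₃) * (e₄ - x))) -
      (∫ x in e₁..e₂, (x ^ 2 + s * x + t) / √((x - e₁) * (x - e₂) * (x - e₃) * (e₄ - x))) =
      π * ((e₁ + e₂ + e₃ + e₄) / 2 + s) := by
  have parametrized := integral_posRoot_sub_integral_negRoot (κ := -(e₃ * e₁)) (A := e₃ + e₁)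
    (B := e₄ + e₂) (neg_pos.2 (mul_neg_of_pos_of_neg h₃ (h₁₂.trans h₂))) (by linarith) s t
  have radicand (x : ℝ) : (x ^ 2 - (e₃ + e₁) * x - -(e₃ * e₁)) *
      (-(e₃ * e₁) + (e₄ + e₂) * x - x ^ 2) = (x - e₁) * (x - e₂) * (x - e₃) * (e₄ - x) := by
    linear_combination (-(x - e₁) * (x - e₃)) * hmul
  have he₄ : posRoot (-(e₃ * e₁)) (e₄ + e₂) = e₄ := by
    rw [hmul, posRoot_neg_mul_add (by linarith)]
  have he₂ : negRoot (-(e₃ * e₁)) (e₄ + e₂) = e₂ := by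
    rw [hmul, negRoot_neg_mul_add (by linarith)]
  rw [he₂, he₄, posRoot_neg_mul_add (by linarith), negRoot_neg_mul_add (by linarith)]
    at parametrized
  simp only [radicand] at parametrized
  rw [parametrized]
  ring

theorem integral_upper_band_sub_integral_lower_band {e₁ e₂ e₃ e₄ : ℝ}
    (h₁₂ : e₁ < e₂) (h₂₃ : e₂ < e₃) (h₃₄ : e₃ < e₄) (s t : ℝ) :
    (∫ x in e₃..e₄, (x ^ 2 + s * x + t) / √((x - e₁) * (x - e₂) * (x - e₃) * (e₄ - x))) -
      (∫ x in e₁..e₂, (x ^ 2 + s * x + t) / √((x - e₁) * (x - e₂) * (x - e₃) * (e₄ - x))) =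
      π * ((e₁ + e₂ + e₃ + e₄) / 2 + s) := by
  obtain ⟨q, hq₂, hq₃, hq⟩ := exists_sub_mul_sub_eq h₁₂ h₂₃ h₃₄
  have translated := integral_upper_band_sub_integral_lower_band_of_mul_eq
    (sub_lt_sub_right h₁₂ q) (sub_neg.2 hq₂) (sub_pos.2 hq₃) (sub_lt_sub_right h₃₄ q) hq
    (s + 2 * q) (q ^ 2 + s * q + t)
  have quadratic (x : ℝ) :
      (x - q) ^ 2 + (s + 2 * q) * (x - q) + (q ^ 2 + s * q + t) = x ^ 2 + s * x + t := by ring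
  rw [← intervalIntegral.integral_comp_sub_right, ← intervalIntegral.integral_comp_sub_right]
    at translated
  simp only [sub_sub_sub_cancel_right, quadratic] at translated
  rw [translated]
  ring

theorem genus1_condensate_mean_general {l1 l2 l3 : ℝ}
    (h1 : 0 < l1) (h12 : l1 < l2) (h23 : l2 < l3) (W : ℝ) :
    (4 / π) * (∫ η in (0 : ℝ)..l1, η ^ 2 * (W - η ^ 2) /
        √((l1 ^ 2 - η ^ 2) * (l2 ^ 2 - η ^ 2) * (l3 ^ 2 - η ^ 2))) +
      (4 / π) * (∫ η in l2..l3, η ^ 2 * (η ^ 2 - W) /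
        √((η ^ 2 - l1 ^ 2) * (η ^ 2 - l2 ^ 2) * (l3 ^ 2 - η ^ 2))) =
      l1 ^ 2 + l2 ^ 2 + l3 ^ 2 - 2 * W := by
  have h2 : 0 < l2 := h1.trans h12
  have bands := integral_upper_band_sub_integral_lower_band (e₁ := 0 ^ 2) (e₂ := l1 ^ 2)
    (e₃ := l2 ^ 2) (e₄ := l3 ^ 2) (by gcongr) (by gcongr) (by gcongr) (-W) 0
  have radicand (x : ℝ) : (x - 0 ^ 2) * (x - l1 ^ 2) * (x - l2 ^ 2) * (l3 ^ 2 - x) =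
      x * ((x - l1 ^ 2) * (x - l2 ^ 2) * (l3 ^ 2 - x)) := by ring
  simp only [radicand] at bands
  rw [integral_div_sqrt_self_mul h2.le (h2.trans h23).le _
      fun x => (x - l1 ^ 2) * (x - l2 ^ 2) * (l3 ^ 2 - x),
    integral_div_sqrt_self_mul le_rfl h1.le _
      fun x => (x - l1 ^ 2) * (x - l2 ^ 2) * (l3 ^ 2 - x)] at bands
  have upper_numerator (η : ℝ) : (η ^ 2) ^ 2 + -W * η ^ 2 + 0 = η ^ 2 * (η ^ 2 - W) := by ring
  have lower_integrand (η : ℝ) : η ^ 2 * (W - η ^ 2) /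
      √((l1 ^ 2 - η ^ 2) * (l2 ^ 2 - η ^ 2) * (l3 ^ 2 - η ^ 2)) =
      -(η ^ 2 * (η ^ 2 - W) / √((η ^ 2 - l1 ^ 2) * (η ^ 2 - l2 ^ 2) * (l3 ^ 2 - η ^ 2))) := by
    rw [show (l1 ^ 2 - η ^ 2) * (l2 ^ 2 - η ^ 2) = (η ^ 2 - l1 ^ 2) * (η ^ 2 - l2 ^ 2) by ring]
    ring
  simp only [upper_numerator] at bands
  simp only [lower_integrand, intervalIntegral.integral_neg]
  field_simp
  linear_combination 2 * bands

end BandIntegrals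

/-- The mean of the KdV wave field in the genus-1 soliton condensate:
with `m = (λ₂²-λ₁²)/(λ₃²-λ₁²)`, `μ(m) = E(m)/K(m)` and `w² = λ₃² - (λ₃²-λ₁²)μ(m)`,
`⟨φ⟩ = 4∫_{Γ⁺} η u(η) dη = λ₁² + λ₂² - λ₃² + 2(λ₃²-λ₁²)μ(m)`. -/
theorem genus1_condensate_mean (l1 l2 l3 : ℝ)
    (h1 : 0 < l1) (h12 : l1 < l2) (h23 : l2 < l3) :
    (4 / Real.pi) *
        (∫ η in (0:ℝ)..l1,
          η ^ 2 * ((l3 ^ 2 - (l3 ^ 2 - l1 ^ 2) *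
              (ellipticE ((l2 ^ 2 - l1 ^ 2) / (l3 ^ 2 - l1 ^ 2)) /
                ellipticK ((l2 ^ 2 - l1 ^ 2) / (l3 ^ 2 - l1 ^ 2)))) - η ^ 2) /
            Real.sqrt ((l1 ^ 2 - η ^ 2) * (l2 ^ 2 - η ^ 2) * (l3 ^ 2 - η ^ 2))) +
      (4 / Real.pi) *
        (∫ η in l2..l3,
          η ^ 2 * (η ^ 2 - (l3 ^ 2 - (l3 ^ 2 - l1 ^ 2) *
              (ellipticE ((l2 ^ 2 - l1 ^ 2) / (l3 ^ 2 - l1 ^ 2)) /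
                ellipticK ((l2 ^ 2 - l1 ^ 2) / (l3 ^ 2 - l1 ^ 2))))) /
            Real.sqrt ((η ^ 2 - l1 ^ 2) * (η ^ 2 - l2 ^ 2) * (l3 ^ 2 - η ^ 2))) =
      l1 ^ 2 + l2 ^ 2 - l3 ^ 2 + 2 * (l3 ^ 2 - l1 ^ 2) *
        (ellipticE ((l2 ^ 2 - l1 ^ 2) / (l3 ^ 2 - l1 ^ 2)) /
          ellipticK ((l2 ^ 2 - l1 ^ 2) / (l3 ^ 2 - l1 ^ 2))) := by
  rw [genus1_condensate_mean_general h1 h12 h23]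
  ring
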